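/- If in addition h(x) < 0 for all x ∈ (α, β) (Case II of the paper: 𝓛g is negative on the whole interval), then: (i) g(x) > 0 for all x ∈ (α, β); (ii) the function x ↦ g(x)/ψ(x) is strictly decreasing on (α, β); and (iii) the function x ↦ g(x)/φ(x) is strictly increasing on (α, β). -/

import Mathlib

open MeasureTheory Set

/-- The integral of a negative function over a nonempty open interval is negative. -/
theorem setIntegral_Ioo_neg {f : ℝ → ℝ} {a b : ℝ} (hab : a < b)
    (hf : IntegrableOn f (Ioo a b)) (hneg : ∀ x ∈ Ioo a b, f x < 0) :
    ∫ s in Ioo a b, f s < 0 := by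
  have hpos : 0 < ∫ s in a..b, -f s :=
    intervalIntegral.intervalIntegral_pos_of_pos_on
      ((intervalIntegrable_iff_integrableOn_Ioo_of_le hab.le).2 hf.neg)
      (fun x hx => neg_pos.2 (hneg x hx)) hab
  rw [intervalIntegral.integral_neg, intervalIntegral.integral_of_le hab.le,
    integral_Ioc_eq_integral_Ioo] at hpos
  linarith

/-- Additivity of the integral over adjacent open intervals. -/
theorem setIntegral_Ioo_add_adjacent {f : ℝ → ℝ} {a b c : ℝ} (hab : a < b) (hbc : b < c)
    (hf : IntegrableOn f (Ioo a c)) :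
    ∫ s in Ioo a c, f s = (∫ s in Ioo a b, f s) + ∫ s in Ioo b c, f s := by
  have hab' := (intervalIntegrable_iff_integrableOn_Ioo_of_le hab.le).2
    (hf.mono_set (Ioo_subset_Ioo_right hbc.le))
  have hbc' := (intervalIntegrable_iff_integrableOn_Ioo_of_le hbc.le).2
    (hf.mono_set (Ioo_subset_Ioo_left hab.le))
  have := intervalIntegral.integral_add_adjacent_intervals hab' hbc'
  rw [intervalIntegral.integral_of_le hab.le, intervalIntegral.integral_of_le hbc.le,
    intervalIntegral.integral_of_le (hab.trans hbc).le] at this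
  simpa only [integral_Ioc_eq_integral_Ioo] using this.symm

/-- Case II: if `𝓛g` has negative density on the whole interval then `g > 0`,
`g/ψ` is strictly decreasing and `g/φ` is strictly increasing. -/
theorem stmt_2
    (α β : ℝ) (hαβ : α < β)
    (φ ψ φ' ψ' k h g : ℝ → ℝ)
    (hφd : ∀ x ∈ Ioo α β, HasDerivAt φ (φ' x) x)
    (hψd : ∀ x ∈ Ioo α β, HasDerivAt ψ (ψ' x) x)
    (hφpos : ∀ x ∈ Ioo α β, 0 < φ x)
    (hφ'neg : ∀ x ∈ Ioo α β, φ' x < 0)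
    (hψpos : ∀ x ∈ Ioo α β, 0 < ψ x)
    (hψ'pos : ∀ x ∈ Ioo α β, 0 < ψ' x)
    (hk : ContinuousOn k (Ioo α β))
    (hkpos : ∀ x ∈ Ioo α β, 0 < k x)
    (hh : ContinuousOn h (Ioo α β))
    (hΦh : IntegrableOn (fun s => φ s * k s * h s) (Ioo α β))
    (hΨh : IntegrableOn (fun s => ψ s * k s * h s) (Ioo α β))
    (hg : ∀ x ∈ Ioo α β, g x =
      -(φ x * (∫ s in Ioo α x, ψ s * k s * h s) +
        ψ x * (∫ s in Ioo x β, φ s * k s * h s)))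
    (hnegh : ∀ x ∈ Ioo α β, h x < 0) :
    (∀ x ∈ Ioo α β, 0 < g x) ∧
    StrictAntiOn (fun x => g x / ψ x) (Ioo α β) ∧
    StrictMonoOn (fun x => g x / φ x) (Ioo α β) := by
  have hφanti : StrictAntiOn φ (Ioo α β) :=
    strictAntiOn_of_deriv_neg (convex_Ioo α β)
      (fun x hx => (hφd x hx).continuousAt.continuousWithinAt) fun x hx => by
        rw [interior_Ioo] at hx
        exact (hφd x hx).deriv ▸ hφ'neg x hx
  have hψmono : StrictMonoOn ψ (Ioo α β) :=
    strictMonoOn_of_deriv_pos (convex_Ioo α β)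
      (fun x hx => (hψd x hx).continuousAt.continuousWithinAt) fun x hx => by
        rw [interior_Ioo] at hx
        exact (hψd x hx).deriv ▸ hψ'pos x hx
  have hcross : ∀ x ∈ Ioo α β, ∀ y ∈ Ioo α β, x < y → φ y * ψ x < φ x * ψ y :=
    fun x hx y hy hxy =>
      mul_lt_mul'' (hφanti hx hy hxy) (hψmono hx hy hxy) (hφpos y hy).le (hψpos x hx).le
  have hkh : ∀ x ∈ Ioo α β, k x * h x < 0 :=
    fun x hx => mul_neg_of_pos_of_neg (hkpos x hx) (hnegh x hx)
  have hΦneg : ∀ x ∈ Ioo α β, φ x * k x * h x < 0 := fun x hx => by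
    rw [mul_assoc]; exact mul_neg_of_pos_of_neg (hφpos x hx) (hkh x hx)
  have hΨneg : ∀ x ∈ Ioo α β, ψ x * k x * h x < 0 := fun x hx => by
    rw [mul_assoc]; exact mul_neg_of_pos_of_neg (hψpos x hx) (hkh x hx)
  have hleft : ∀ x ∈ Ioo α β, ∫ s in Ioo α x, ψ s * k s * h s < 0 := fun x hx =>
    setIntegral_Ioo_neg hx.1 (hΨh.mono_set (Ioo_subset_Ioo_right hx.2.le))
      fun s hs => hΨneg s ⟨hs.1, hs.2.trans hx.2⟩
  have hright : ∀ x ∈ Ioo α β, ∫ s in Ioo x β, φ s * k s * h s < 0 := fun x hx =>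
    setIntegral_Ioo_neg hx.2 (hΦh.mono_set (Ioo_subset_Ioo_left hx.1.le))
      fun s hs => hΦneg s ⟨hx.1.trans hs.1, hs.2⟩
  refine ⟨fun x hx => ?_, fun x hx y hy hxy => ?_, fun x hx y hy hxy => ?_⟩
  · rw [hg x hx]
    have h₁ := mul_neg_of_pos_of_neg (hφpos x hx) (hleft x hx)
    have h₂ := mul_neg_of_pos_of_neg (hψpos x hx) (hright x hx)
    linarith
  all_goals
    have hsub : Ioo x y ⊆ Ioo α β := Ioo_subset_Ioo hx.1.le hy.2.le
    have hA := setIntegral_Ioo_add_adjacent hx.1 hxy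
      (hΨh.mono_set (Ioo_subset_Ioo_right hy.2.le))
    have hB := setIntegral_Ioo_add_adjacent hxy hy.2
      (hΦh.mono_set (Ioo_subset_Ioo_left hx.1.le))
    have hc := hcross x hx y hy hxy
    have hφx := hφpos x hx
    have hφy := hφpos y hy
    have hψx := hψpos x hx
    have hψy := hψpos y hy
  · have hI : ψ y * (∫ s in Ioo x y, φ s * k s * h s) ≤
        φ y * ∫ s in Ioo x y, ψ s * k s * h s := by
      rw [← integral_const_mul, ← integral_const_mul]
      refine setIntegral_mono_on ((hΦh.mono_set hsub).const_mul _)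
        ((hΨh.mono_set hsub).const_mul _) measurableSet_Ioo fun s hs => ?_
      nlinarith [mul_pos_of_neg_of_neg (hkh s (hsub hs))
        (sub_neg.2 (hcross s (hsub hs) y hy hs.2))]
    have hlx := hleft x hx
    simp only
    rw [div_lt_div_iff₀ hψy hψx, hg x hx, hg y hy, hA, hB]
    nlinarith [mul_le_mul_of_nonneg_left hI hψx.le, mul_pos_of_neg_of_neg hlx (sub_neg.2 hc)]
  · have hI : φ x * (∫ s in Ioo x y, ψ s * k s * h s) ≤
        ψ x * ∫ s in Ioo x y, φ s * k s * h s := by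
      rw [← integral_const_mul, ← integral_const_mul]
      refine setIntegral_mono_on ((hΨh.mono_set hsub).const_mul _)
        ((hΦh.mono_set hsub).const_mul _) measurableSet_Ioo fun s hs => ?_
      nlinarith [mul_pos_of_neg_of_neg (hkh s (hsub hs))
        (sub_neg.2 (hcross x hx s (hsub hs) hs.1))]
    have hry := hright y hy
    simp only
    rw [div_lt_div_iff₀ hφx hφy, hg x hx, hg y hy, hA, hB]
    nlinarith [mul_le_mul_of_nonneg_left hI hφy.le, mul_pos_of_neg_of_neg hry (sub_neg.2 hc)]
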